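/- If S | R1 ~ S | R2 and S ▷ Ri for i = 1, 2, then R1 ≡D R2. -/

import Mathlib

namespace CCS

/-- Process terms over a set of actions `A`. -/
inductive Proc (A : Type) where
  | nil : Proc A
  | pre : A → Proc A → Proc A
  | par : Proc A → Proc A → Proc A
  | repl : A → Proc A → Proc A

namespace Proc

/-- Finite processes: no occurrence of replication. -/
def IsFin {A : Type} : Proc A → Prop
  | nil => True
  | pre _ p => IsFin p
  | par p q => IsFin p ∧ IsFin q
  | repl _ _ => False

/-- Processes of the calculus: replication is applied only to prefixed
finite processes, at top level. -/
def Wf {A : Type} : Proc A → Prop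
  | nil => True
  | pre _ p => IsFin p
  | par p q => Wf p ∧ Wf q
  | repl _ p => IsFin p

/-- Size: the number of prefixes. -/
def size {A : Type} : Proc A → ℕ
  | nil => 0
  | pre _ p => size p + 1
  | par p q => size p + size q
  | repl _ p => size p + 1

/-- `reps n p` is the parallel composition of `n` copies of `p`. -/
def reps {A : Type} : ℕ → Proc A → Proc A
  | 0, _ => nil
  | n+1, p => par p (reps n p)

/-- `bang F` is `!F`: for `F = α₁.F₁ | ... | αk.Fk` it is `!α₁.F₁ | ... | !αk.Fk`. -/
def bang {A : Type} : Proc A → Proc A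
  | nil => nil
  | pre a p => repl a p
  | par p q => par (bang p) (bang q)
  | repl a p => repl a p

end Proc

/-- The labelled transition system (no synchronisation). -/
inductive Step {A : Type} : Proc A → A → Proc A → Prop where
  | pre {a : A} {p : Proc A} : Step (Proc.pre a p) a p
  | repl {a : A} {p : Proc A} :
      Step (Proc.repl a p) a (Proc.par (Proc.repl a p) p)
  | parL {p : Proc A} {a : A} {p' : Proc A} (q : Proc A) :
      Step p a p' → Step (Proc.par p q) a (Proc.par p' q)
  | parR {q : Proc A} {a : A} {q' : Proc A} (p : Proc A) :
      Step q a q' → Step (Proc.par p q) a (Proc.par p q')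

/-- Strong bisimulations. -/
def IsBisim {A : Type} (R : Proc A → Proc A → Prop) : Prop :=
  Symmetric R ∧
    ∀ p q, R p q → ∀ a p', Step p a p' → ∃ q', Step q a q' ∧ R p' q'

/-- Strong bisimilarity `~`: the greatest strong bisimulation. -/
def Bisim {A : Type} (p q : Proc A) : Prop :=
  ∃ R, IsBisim R ∧ R p q

/-- The congruence `≡D`: the smallest congruence generated by the abelian
monoid laws for parallel composition (neutral element `0`) and the
distribution law `α.(F | α.F | ... | α.F) = α.F | α.F | ... | α.F`
(with as many occurrences of `F` on both sides). -/
inductive EqD {A : Type} : Proc A → Proc A → Prop where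
  | refl (p : Proc A) : EqD p p
  | symm {p q : Proc A} : EqD p q → EqD q p
  | trans {p q r : Proc A} : EqD p q → EqD q r → EqD p r
  | parComm (p q : Proc A) : EqD (Proc.par p q) (Proc.par q p)
  | parAssoc (p q r : Proc A) :
      EqD (Proc.par (Proc.par p q) r) (Proc.par p (Proc.par q r))
  | parNil (p : Proc A) : EqD (Proc.par p Proc.nil) p
  | distr (a : A) (F : Proc A) (n : ℕ) (hF : F.IsFin) :
      EqD (Proc.pre a (Proc.par F (Proc.reps n (Proc.pre a F))))
          (Proc.reps (n + 1) (Proc.pre a F))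
  | congPre (a : A) {p q : Proc A} : EqD p q → EqD (Proc.pre a p) (Proc.pre a q)
  | congPar {p p' q q' : Proc A} :
      EqD p p' → EqD q q' → EqD (Proc.par p q) (Proc.par p' q')
  | congRepl (a : A) {p q : Proc A} : EqD p q → EqD (Proc.repl a p) (Proc.repl a q)

/-- Finite (single-hole) contexts `D ::= [] | α.D | D|F`. -/
inductive FCtx (A : Type) where
  | hole : FCtx A
  | pre : A → FCtx A → FCtx A
  | par : FCtx A → Proc A → FCtx A

/-- Filling the hole of a finite context. -/
def FCtx.fill {A : Type} : FCtx A → Proc A → Proc A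
  | .hole, p => p
  | .pre a d, p => Proc.pre a (d.fill p)
  | .par d f, p => Proc.par (d.fill p) f

/-- Well-formedness of a finite context: the processes placed in parallel
are finite. -/
def FCtx.Wf {A : Type} : FCtx A → Prop
  | .hole => True
  | .pre _ d => d.Wf
  | .par d f => d.Wf ∧ f.IsFin

/-- Single-hole contexts `C ::= D | !α.D | C|P` (the hole never occurs
directly under a replication). -/
inductive Ctx (A : Type) where
  | ofD : FCtx A → Ctx A
  | repl : A → FCtx A → Ctx A
  | par : Ctx A → Proc A → Ctx A

/-- Filling the hole of a context. -/
def Ctx.fill {A : Type} : Ctx A → Proc A → Proc A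
  | .ofD d, p => d.fill p
  | .repl a d, p => Proc.repl a (d.fill p)
  | .par c q, p => Proc.par (c.fill p) q

/-- Well-formedness of a context. -/
def Ctx.Wf {A : Type} : Ctx A → Prop
  | .ofD d => d.Wf
  | .repl _ d => d.Wf
  | .par c p => c.Wf ∧ p.Wf

/-- `k` consecutive transitions. -/
inductive NSteps {A : Type} : Proc A → ℕ → Proc A → Prop where
  | zero (p : Proc A) : NSteps p 0 p
  | succ {p : Proc A} {a : A} {p' : Proc A} {k : ℕ} {q : Proc A} :
      Step p a p' → NSteps p' k q → NSteps p (k + 1) q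

/-- `P ⇒k Q`: `k` transitions from `P` reach a process `≡D Q`. -/
def Reduct {A : Type} (p : Proc A) (k : ℕ) (q : Proc A) : Prop :=
  ∃ p', NSteps p k p' ∧ EqD p' q

/-- `TopRepl S a G` holds when `!a.G` is one of the (top-level) replicated
parallel components of `S`. -/
inductive TopRepl {A : Type} : Proc A → A → Proc A → Prop where
  | repl (a : A) (p : Proc A) : TopRepl (Proc.repl a p) a p
  | parL {p : Proc A} {a : A} {r : Proc A} (q : Proc A) :
      TopRepl p a r → TopRepl (Proc.par p q) a r
  | parR {q : Proc A} {a : A} {r : Proc A} (p : Proc A) :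
      TopRepl q a r → TopRepl (Proc.par p q) a r

/-- `S` has only replicated components: `S = ∏i !αi.Si`. -/
def ReplOnly {A : Type} : Proc A → Prop
  | .nil => True
  | .pre _ _ => False
  | .par p q => ReplOnly p ∧ ReplOnly q
  | .repl _ p => p.IsFin

/-- `S ⫫ F` : for no component `!αi.Si` of `S` and no `k` do we have
`F ⇒k αi.Si`. -/
def Dis {A : Type} (S F : Proc A) : Prop :=
  ∀ a G, TopRepl S a G → ∀ k, ¬ Reduct F k (Proc.pre a G)

/-- `S ▷ R` : there is `k > 0` with `S ⇒k S | R`. -/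
def Purg {A : Type} (S R : Proc A) : Prop :=
  ∃ k, 0 < k ∧ Reduct S k (Proc.par S R)

/-- A process is a seed if no (well-formed) process of strictly smaller
size is bisimilar to it. -/
def IsSeed {A : Type} (p : Proc A) : Prop :=
  p.Wf ∧ ∀ q : Proc A, q.Wf → Bisim q p → p.size ≤ q.size

/-- The rewriting relation `⤳_T` (first argument), defined modulo `≡D` by
the axioms (B1) `C[α.F] ⤳_{!α.F|F'} C[0]` and (B2) `!α.F | !α.F | P ⤳_Q !α.F | P`. -/
inductive Rw {A : Type} : Proc A → Proc A → Proc A → Prop where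
  | B1 {a : A} {F F' : Proc A} (C : Ctx A) :
      F.IsFin → F'.Wf → C.Wf →
      Rw (Proc.par (Proc.repl a F) F') (C.fill (Proc.pre a F)) (C.fill Proc.nil)
  | B2 {a : A} {F P Q : Proc A} :
      F.IsFin → P.Wf → Q.Wf →
      Rw Q (Proc.par (Proc.repl a F) (Proc.par (Proc.repl a F) P))
           (Proc.par (Proc.repl a F) P)
  | eqD {T T' P P' Q Q' : Proc A} :
      EqD T T' → EqD P P' → Rw T' P' Q' → EqD Q Q' → Rw T P Q

/-- `⤳*_T` : the reflexive transitive closure of `⤳_T`. -/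
def RwStar {A : Type} (T : Proc A) : Proc A → Proc A → Prop :=
  Relation.ReflTransGen (Rw T)

/-- Convertibility `P ⋈ Q`: some process `T` satisfies `P ⤳*_T T` and `Q ⤳*_T T`. -/
def Convert {A : Type} (P Q : Proc A) : Prop :=
  ∃ T : Proc A, T.Wf ∧ RwStar T P T ∧ RwStar T Q T

/-- `∏i αi.Fi` for a list of prefixed components. -/
def prodPre {A : Type} (l : List (A × Proc A)) : Proc A :=
  (l.map fun x => Proc.pre x.1 x.2).foldr Proc.par Proc.nil

/-- `∏i !αi.Fi` for a list of prefixed components. -/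
def bangProd {A : Type} (l : List (A × Proc A)) : Proc A :=
  (l.map fun x => Proc.repl x.1 x.2).foldr Proc.par Proc.nil

end CCS

/-!
Bisimilarity classes form a commutative monoid under parallel composition, and a bisimulation
may be checked up to the congruence it generates.

On finite processes `≡D` coincides with `~`: finite classes cancel, and each is in a unique way a
sum of prefixes `a.x` to which the distribution law does not apply; a finite process is `≡D` to
the normal form spelled out by this decomposition.

It remains to see `R₁ ~ R₂`. Up to `≡D`, every prefixed subterm of `Rᵢ` occurs in `S`. For such a
finite `T`, a seed satisfies `S | T ~ S` only if `T` is empty. Indeed a smallest `a.R` absorbed by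
`S` yields a component `!a.G` with `S | G ~ S | R`. If `R` is not larger than `G`, replacing `!a.G`
by `!a.R` and erasing the now redundant `a.R` makes `S` smaller; if it is larger, running `G` to
termination leaves a nonempty part of `R` absorbed by `S`, hence a smaller absorbed prefix.
Consequently `S | T₁ ~ S | T₂` forces equal sizes, so a transition of `T₁` can never be answered
by `S`, which would only spawn more prefixes; it must be answered by `T₂`.
-/

namespace CCS

variable {A : Type}

/-! ### Bisimilarity and the distribution law -/

theorem Bisim.refl (p : Proc A) : Bisim p p :=
  ⟨Eq, ⟨fun _ _ => Eq.symm, by rintro p _ rfl a p' hs; exact ⟨p', hs, rfl⟩⟩, rfl⟩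

theorem Bisim.symm {p q : Proc A} : Bisim p q → Bisim q p :=
  fun ⟨R, hR, h⟩ => ⟨R, hR, hR.1 h⟩

theorem Bisim.exists_step {p q p' : Proc A} {a : A} (h : Bisim p q) (hs : Step p a p') :
    ∃ q', Step q a q' ∧ Bisim p' q' := by
  obtain ⟨R, hR, hpq⟩ := h
  obtain ⟨q', hq, hR'⟩ := hR.2 p q hpq a p' hs
  exact ⟨q', hq, R, hR, hR'⟩

theorem Bisim.trans {p q r : Proc A} (hpq : Bisim p q) (hqr : Bisim q r) : Bisim p r := by
  refine ⟨fun x z => ∃ y, Bisim x y ∧ Bisim y z, ⟨?_, ?_⟩, q, hpq, hqr⟩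
  · rintro x z ⟨y, hxy, hyz⟩
    exact ⟨y, hyz.symm, hxy.symm⟩
  · rintro x z ⟨y, hxy, hyz⟩ a x' hs
    obtain ⟨y', hy, hxy'⟩ := hxy.exists_step hs
    obtain ⟨z', hz, hyz'⟩ := hyz.exists_step hy
    exact ⟨z', hz, y', hxy', hyz'⟩

theorem Bisim.par {p q r s : Proc A} (hpq : Bisim p q) (hrs : Bisim r s) :
    Bisim (p.par r) (q.par s) := by
  refine ⟨fun x y => ∃ p q r s, x = .par p r ∧ y = .par q s ∧ Bisim p q ∧ Bisim r s,
    ⟨?_, ?_⟩, p, q, r, s, rfl, rfl, hpq, hrs⟩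
  · rintro _ _ ⟨p, q, r, s, rfl, rfl, hpq, hrs⟩
    exact ⟨q, p, s, r, rfl, rfl, hpq.symm, hrs.symm⟩
  · rintro _ _ ⟨p, q, r, s, rfl, rfl, hpq, hrs⟩ a _ (_ | _ | ⟨_, hs⟩ | ⟨_, hs⟩)
    · obtain ⟨q', hq, hpq'⟩ := hpq.exists_step hs
      exact ⟨_, .parL _ hq, _, _, _, _, rfl, rfl, hpq', hrs⟩
    · obtain ⟨s', hs', hrs'⟩ := hrs.exists_step hs
      exact ⟨_, .parR _ hs', _, _, _, _, rfl, rfl, hpq, hrs'⟩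

theorem Bisim.pre {p q : Proc A} (a : A) (h : Bisim p q) : Bisim (.pre a p) (.pre a q) := by
  refine ⟨fun x y => Bisim x y ∨ ∃ p q, x = .pre a p ∧ y = .pre a q ∧ Bisim p q,
    ⟨?_, ?_⟩, .inr ⟨p, q, rfl, rfl, h⟩⟩
  · rintro _ _ (h | ⟨p, q, rfl, rfl, h⟩)
    · exact .inl h.symm
    · exact .inr ⟨q, p, rfl, rfl, h.symm⟩
  · rintro _ _ (h | ⟨p, q, rfl, rfl, h⟩) b x' hs
    · obtain ⟨y', hy, h'⟩ := h.exists_step hs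
      exact ⟨y', hy, .inl h'⟩
    · cases hs
      exact ⟨q, .pre, .inl h⟩

theorem EqD.nilPar (p : Proc A) : EqD (.par .nil p) p :=
  (EqD.parComm _ _).trans (.parNil p)

theorem EqD.parLeftComm (p q r : Proc A) : EqD (p.par (q.par r)) (q.par (p.par r)) :=
  (EqD.parAssoc _ _ _).symm.trans ((EqD.congPar (.parComm _ _) (.refl _)).trans (.parAssoc _ _ _))

/-- One half of the transfer property for `≡D`: every transition of `p` is matched by `q`. -/
def EqD.Matches (p q : Proc A) : Prop :=
  ∀ a p', Step p a p' → ∃ q', Step q a q' ∧ EqD p' q'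

theorem EqD.matches_parComm (p q : Proc A) : Matches (p.par q) (q.par p) := by
  rintro a _ (_ | _ | ⟨_, hs⟩ | ⟨_, hs⟩)
  · exact ⟨_, .parR _ hs, .parComm _ _⟩
  · exact ⟨_, .parL _ hs, .parComm _ _⟩

theorem EqD.matches_parAssoc (p q r : Proc A) :
    Matches ((p.par q).par r) (p.par (q.par r)) := by
  rintro a _ (_ | _ | ⟨_, _ | _ | ⟨_, hs⟩ | ⟨_, hs⟩⟩ | ⟨_, hs⟩)
  · exact ⟨_, .parL _ hs, .parAssoc _ _ _⟩
  · exact ⟨_, .parR _ (.parL _ hs), .parAssoc _ _ _⟩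
  · exact ⟨_, .parR _ (.parR _ hs), .parAssoc _ _ _⟩

theorem EqD.matches_parAssoc_symm (p q r : Proc A) :
    Matches (p.par (q.par r)) ((p.par q).par r) := by
  rintro a _ (_ | _ | ⟨_, hs⟩ | ⟨_, _ | _ | ⟨_, hs⟩ | ⟨_, hs⟩⟩)
  · exact ⟨_, .parL _ (.parL _ hs), (EqD.parAssoc _ _ _).symm⟩
  · exact ⟨_, .parL _ (.parR _ hs), (EqD.parAssoc _ _ _).symm⟩
  · exact ⟨_, .parR _ hs, (EqD.parAssoc _ _ _).symm⟩

theorem EqD.matches_par {p p' q q' : Proc A} (hp : EqD p p') (hq : EqD q q')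
    (hpm : Matches p p') (hqm : Matches q q') : Matches (p.par q) (p'.par q') := by
  rintro a _ (_ | _ | ⟨_, hs⟩ | ⟨_, hs⟩)
  · obtain ⟨r, hr, hE⟩ := hpm _ _ hs
    exact ⟨_, .parL _ hr, .congPar hE hq⟩
  · obtain ⟨r, hr, hE⟩ := hqm _ _ hs
    exact ⟨_, .parR _ hr, .congPar hp hE⟩

theorem Step.of_reps_pre {a b : A} {F q : Proc A} {n : ℕ}
    (h : Step (.reps (n + 1) (.pre a F)) b q) :
    b = a ∧ EqD q (F.par (.reps n (.pre a F))) := by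
  induction n generalizing q with
  | zero =>
    obtain _ | _ | ⟨_, hs⟩ | ⟨_, hs⟩ := h
    · cases hs
      exact ⟨rfl, .refl _⟩
    · cases hs
  | succ n ih =>
    obtain _ | _ | ⟨_, hs⟩ | ⟨_, hs⟩ := h
    · cases hs
      exact ⟨rfl, .refl _⟩
    · obtain ⟨rfl, hE⟩ := ih hs
      exact ⟨rfl, (EqD.congPar (.refl _) hE).trans (.parLeftComm _ _ _)⟩

theorem EqD.matches_and_matches_symm {p q : Proc A} (h : EqD p q) :
    Matches p q ∧ Matches q p := by
  induction h with
  | refl p => exact ⟨fun _ p' hs => ⟨p', hs, .refl _⟩, fun _ p' hs => ⟨p', hs, .refl _⟩⟩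
  | symm _ ih => exact ih.symm
  | trans _ _ ihpq ihqr =>
    refine ⟨fun a p' hs => ?_, fun a r' hs => ?_⟩
    · obtain ⟨q', hq, hpq⟩ := ihpq.1 a p' hs
      obtain ⟨r', hr, hqr⟩ := ihqr.1 a q' hq
      exact ⟨r', hr, hpq.trans hqr⟩
    · obtain ⟨q', hq, hrq⟩ := ihqr.2 a r' hs
      obtain ⟨p', hp, hqp⟩ := ihpq.2 a q' hq
      exact ⟨p', hp, hrq.trans hqp⟩
  | parComm p q => exact ⟨matches_parComm p q, matches_parComm q p⟩
  | parAssoc p q r => exact ⟨matches_parAssoc p q r, matches_parAssoc_symm p q r⟩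
  | parNil p =>
    refine ⟨?_, fun a p' hs => ⟨_, .parL _ hs, (EqD.parNil _).symm⟩⟩
    rintro a _ (_ | _ | ⟨_, hs⟩ | ⟨_, hs⟩)
    · exact ⟨_, hs, .parNil _⟩
    · cases hs
  | distr a F n =>
    refine ⟨?_, fun b q hs => ?_⟩
    · rintro _ _ (_ | _)
      exact ⟨_, .parL _ .pre, .refl _⟩
    · obtain ⟨rfl, hE⟩ := hs.of_reps_pre
      exact ⟨_, .pre, hE⟩
  | congPre a h _ =>
    refine ⟨?_, ?_⟩ <;> rintro _ _ (_ | _)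
    · exact ⟨_, .pre, h⟩
    · exact ⟨_, .pre, h.symm⟩
  | congPar hp hq ihp ihq =>
    exact ⟨matches_par hp hq ihp.1 ihq.1, matches_par hp.symm hq.symm ihp.2 ihq.2⟩
  | congRepl a h _ =>
    refine ⟨?_, ?_⟩ <;> rintro _ _ (_ | _)
    · exact ⟨_, .repl, .congPar (.congRepl a h) h⟩
    · exact ⟨_, .repl, .congPar (.congRepl a h.symm) h.symm⟩

theorem EqD.bisim {p q : Proc A} (h : EqD p q) : Bisim p q :=
  ⟨EqD, ⟨fun _ _ => EqD.symm, fun _ _ hE => hE.matches_and_matches_symm.1⟩, h⟩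

/-! ### The monoid of bisimilarity classes -/

instance bisimSetoid (A : Type) : Setoid (Proc A) where
  r := Bisim
  iseqv := ⟨Bisim.refl, Bisim.symm, Bisim.trans⟩

/-- Processes modulo bisimilarity; an additive commutative monoid under parallel composition. -/
def BisimClass (A : Type) : Type := Quotient (bisimSetoid A)

/-- The bisimilarity class of a process. -/
def Proc.cls (p : Proc A) : BisimClass A := Quotient.mk _ p

theorem Proc.cls_eq_cls {p q : Proc A} : p.cls = q.cls ↔ Bisim p q := Quotient.eq

theorem EqD.cls_eq {p q : Proc A} (h : EqD p q) : p.cls = q.cls :=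
  Proc.cls_eq_cls.2 h.bisim

namespace BisimClass

theorem exists_cls_eq (x : BisimClass A) : ∃ p : Proc A, p.cls = x := Quotient.exists_rep x

instance : Zero (BisimClass A) := ⟨Proc.nil.cls⟩

instance : Add (BisimClass A) :=
  ⟨Quotient.map₂ Proc.par fun _ _ hp _ _ hq => hp.par hq⟩

instance : AddCommMonoid (BisimClass A) where
  add_assoc := by rintro ⟨p⟩ ⟨q⟩ ⟨r⟩; exact (EqD.parAssoc p q r).cls_eq
  zero_add := by rintro ⟨p⟩; exact (EqD.nilPar p).cls_eq
  add_zero := by rintro ⟨p⟩; exact (EqD.parNil p).cls_eq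
  add_comm := by rintro ⟨p⟩ ⟨q⟩; exact (EqD.parComm p q).cls_eq
  nsmul := nsmulRec

/-- The action prefix `a.x` on bisimilarity classes. -/
def pre (a : A) : BisimClass A → BisimClass A :=
  Quotient.map (Proc.pre a) fun _ _ h => h.pre a

end BisimClass

theorem Proc.cls_nil : (Proc.nil : Proc A).cls = 0 := rfl

theorem Proc.cls_par (p q : Proc A) : (p.par q).cls = p.cls + q.cls := rfl

theorem Proc.cls_pre (a : A) (p : Proc A) : (Proc.pre a p).cls = p.cls.pre a := rfl

theorem Proc.cls_reps (n : ℕ) (p : Proc A) : (Proc.reps n p).cls = n • p.cls := by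
  induction n with
  | zero => rw [zero_nsmul, Proc.reps, Proc.cls_nil]
  | succ n ih => rw [Proc.reps, Proc.cls_par, ih, succ_nsmul']

/-- The transition relation induced on bisimilarity classes. -/
def BisimClass.StepTo (x : BisimClass A) (a : A) (y : BisimClass A) : Prop :=
  ∃ p p' : Proc A, p.cls = x ∧ p'.cls = y ∧ Step p a p'

theorem Step.stepTo {p p' : Proc A} {a : A} (h : Step p a p') :
    p.cls.StepTo a p'.cls :=
  ⟨p, p', rfl, rfl, h⟩

namespace BisimClass

theorem stepTo_cls {p : Proc A} {a : A} {y : BisimClass A} :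
    p.cls.StepTo a y ↔ ∃ p', Step p a p' ∧ p'.cls = y := by
  constructor
  · rintro ⟨q, q', hqp, rfl, hs⟩
    obtain ⟨p', hp, hb⟩ := (Proc.cls_eq_cls.1 hqp).exists_step hs
    exact ⟨p', hp, Proc.cls_eq_cls.2 hb.symm⟩
  · rintro ⟨p', hs, rfl⟩
    exact ⟨p, p', rfl, rfl, hs⟩

theorem not_stepTo_zero {a : A} {y : BisimClass A} : ¬ StepTo 0 a y := by
  rw [← Proc.cls_nil, stepTo_cls]
  rintro ⟨_, hs, _⟩
  cases hs

theorem stepTo_pre {a b : A} {x y : BisimClass A} : (x.pre a).StepTo b y ↔ b = a ∧ y = x := by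
  obtain ⟨p, rfl⟩ := exists_cls_eq x
  rw [← Proc.cls_pre, stepTo_cls]
  constructor
  · rintro ⟨_, _ | _, rfl⟩
    exact ⟨rfl, rfl⟩
  · rintro ⟨rfl, rfl⟩
    exact ⟨p, .pre, rfl⟩

theorem stepTo_repl {a b : A} {p : Proc A} {y : BisimClass A} :
    (Proc.repl a p).cls.StepTo b y ↔ b = a ∧ y = (Proc.repl a p).cls + p.cls := by
  rw [stepTo_cls]
  constructor
  · rintro ⟨_, _ | _, rfl⟩
    exact ⟨rfl, rfl⟩
  · rintro ⟨rfl, rfl⟩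
    exact ⟨_, .repl, rfl⟩

theorem stepTo_add {x y z : BisimClass A} {a : A} :
    (x + y).StepTo a z ↔
      (∃ x', x.StepTo a x' ∧ z = x' + y) ∨ ∃ y', y.StepTo a y' ∧ z = x + y' := by
  obtain ⟨p, rfl⟩ := exists_cls_eq x
  obtain ⟨q, rfl⟩ := exists_cls_eq y
  rw [← Proc.cls_par, stepTo_cls]
  constructor
  · rintro ⟨_, _ | _ | ⟨_, hs⟩ | ⟨_, hs⟩, rfl⟩
    · exact .inl ⟨_, hs.stepTo, rfl⟩
    · exact .inr ⟨_, hs.stepTo, rfl⟩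
  · rintro (⟨x', hs, rfl⟩ | ⟨y', hs, rfl⟩)
    · obtain ⟨p', hp, rfl⟩ := stepTo_cls.1 hs
      exact ⟨_, .parL _ hp, rfl⟩
    · obtain ⟨q', hq, rfl⟩ := stepTo_cls.1 hs
      exact ⟨_, .parR _ hq, rfl⟩

theorem StepTo.add_right {x x' : BisimClass A} {a : A} (h : x.StepTo a x') (y : BisimClass A) :
    (x + y).StepTo a (x' + y) :=
  stepTo_add.2 (.inl ⟨x', h, rfl⟩)

theorem StepTo.add_left {y y' : BisimClass A} {a : A} (h : y.StepTo a y') (x : BisimClass A) :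
    (x + y).StepTo a (x + y') :=
  stepTo_add.2 (.inr ⟨y', h, rfl⟩)

/-- Every transition of `x` is matched by one of `y` with targets related by the congruence `c`. -/
def SimulatedUpTo (c : AddCon (BisimClass A)) (x y : BisimClass A) : Prop :=
  ∀ a x', x.StepTo a x' → ∃ y', y.StepTo a y' ∧ c x' y'

theorem SimulatedUpTo.add {c : AddCon (BisimClass A)} {w x y z : BisimClass A} (hwx : c w x)
    (hyz : c y z) (hwx' : SimulatedUpTo c w x) (hyz' : SimulatedUpTo c y z) :
    SimulatedUpTo c (w + y) (x + z) := by
  intro a v hv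
  rcases stepTo_add.1 hv with ⟨w', hs, rfl⟩ | ⟨y', hs, rfl⟩
  · obtain ⟨x', hx, hc⟩ := hwx' a w' hs
    exact ⟨_, hx.add_right z, c.add hc hyz⟩
  · obtain ⟨z', hz, hc⟩ := hyz' a y' hs
    exact ⟨_, hz.add_left x, c.add hwx hc⟩

theorem SimulatedUpTo.trans {c : AddCon (BisimClass A)} {x y z : BisimClass A}
    (hxy : SimulatedUpTo c x y) (hyz : SimulatedUpTo c y z) : SimulatedUpTo c x z := by
  intro a x' hx
  obtain ⟨y', hy, hc⟩ := hxy a x' hx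
  obtain ⟨z', hz, hc'⟩ := hyz a y' hy
  exact ⟨z', hz, c.trans hc hc'⟩

theorem eq_of_addCon {c : AddCon (BisimClass A)}
    (hc : ∀ x y, c x y → SimulatedUpTo c x y) {x y : BisimClass A} (hxy : c x y) : x = y := by
  obtain ⟨p, rfl⟩ := exists_cls_eq x
  obtain ⟨q, rfl⟩ := exists_cls_eq y
  refine Proc.cls_eq_cls.2 ⟨fun p q => c p.cls q.cls, ⟨fun _ _ => c.symm, ?_⟩, hxy⟩
  intro p q hpq a p' hs
  obtain ⟨y', hy, hc'⟩ := hc _ _ hpq a _ hs.stepTo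
  obtain ⟨q', hq, rfl⟩ := stepTo_cls.1 hy
  exact ⟨q', hq, hc'⟩

theorem eq_of_simulatedUpTo {R : BisimClass A → BisimClass A → Prop}
    (hR : ∀ x y, R x y →
      SimulatedUpTo (addConGen R) x y ∧ SimulatedUpTo (addConGen R) y x)
    {x y : BisimClass A} (hxy : R x y) : x = y := by
  refine eq_of_addCon (c := addConGen R) (fun x y h => And.left (b :=
    SimulatedUpTo (addConGen R) y x) ?_) (AddConGen.Rel.of x y hxy)
  change AddConGen.Rel R x y at h
  induction h with
  | of x y h => exact hR x y h
  | refl x =>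
    have hx : SimulatedUpTo (addConGen R) x x := fun a x' hs => ⟨x', hs, AddCon.refl _ _⟩
    exact ⟨hx, hx⟩
  | symm _ ih => exact ih.symm
  | trans _ _ ih ih' => exact ⟨ih.1.trans ih'.1, ih'.2.trans ih.2⟩
  | add h h' ih ih' =>
    exact ⟨ih.1.add h h' ih'.1, ih.2.add (AddCon.symm _ h) (AddCon.symm _ h') ih'.2⟩

/-! ### Persistent classes -/

/-- Classes that survive their own transitions, such as those of replicated processes. -/
def Persistent (s : BisimClass A) : Prop :=
  ∀ a z, s.StepTo a z → ∃ y, z = s + y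

theorem persistent_repl (a : A) (p : Proc A) : (Proc.repl a p).cls.Persistent :=
  fun _ _ h => ⟨p.cls, (stepTo_repl.1 h).2⟩

/-- Only the transitions of `x` and `y` need matching, since those of `s` keep `s + x` and
`s + y` available to the congruence. -/
theorem Persistent.add_eq_add {s x y : BisimClass A} (hs : s.Persistent)
    (hx : ∀ c : AddCon (BisimClass A), c (s + x) (s + y) → ∀ a x', x.StepTo a x' →
      ∃ z, (s + y).StepTo a z ∧ c (s + x') z)
    (hy : ∀ c : AddCon (BisimClass A), c (s + x) (s + y) → ∀ a y', y.StepTo a y' →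
      ∃ z, (s + x).StepTo a z ∧ c (s + y') z) :
    s + x = s + y := by
  have simulated {c : AddCon (BisimClass A)} {u v : BisimClass A} (hc : c (s + u) (s + v))
      (hu : ∀ a u', u.StepTo a u' → ∃ z, (s + v).StepTo a z ∧ c (s + u') z) :
      SimulatedUpTo c (s + u) (s + v) := by
    intro a z hz
    rcases stepTo_add.1 hz with ⟨s', hs', rfl⟩ | ⟨u', hu', rfl⟩
    · obtain ⟨w, rfl⟩ := hs a s' hs'
      refine ⟨_, hs'.add_right v, ?_⟩
      rw [add_right_comm s w u, add_right_comm s w v]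
      exact c.add hc (c.refl w)
    · exact hu a u' hu'
  let R : BisimClass A → BisimClass A → Prop := fun u v => u = s + x ∧ v = s + y
  refine eq_of_simulatedUpTo (R := R) ?_ ⟨rfl, rfl⟩
  rintro _ _ ⟨rfl, rfl⟩
  have hc : addConGen R (s + x) (s + y) := AddConGen.Rel.of _ _ ⟨rfl, rfl⟩
  exact ⟨simulated hc (hx _ hc), simulated (AddCon.symm _ hc) (hy _ hc)⟩

theorem Persistent.add_eq_self_of_add_add_eq_self {s x y : BisimClass A} (hs : s.Persistent)
    (h : s + (x + y) = s) : s + x = s := by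
  suffices s + x = s + 0 by rwa [add_zero] at this
  refine hs.add_eq_add (fun c hc a x' hx => ⟨s + (x' + y), ?_, ?_⟩)
    fun _ _ _ _ h0 => absurd h0 not_stepTo_zero
  · rw [add_zero, ← congrArg (StepTo · a) h]
    exact (hx.add_right y).add_left s
  · rw [add_zero] at hc
    have hc' := c.add hc (c.refl (x' + y))
    rwa [show s + x + (x' + y) = s + (x + y) + x' by abel, h] at hc'

theorem Persistent.add_pre_eq_add_pre {s x y : BisimClass A} (hs : s.Persistent) (a : A)
    (h : s + x = s + y) : s + x.pre a = s + y.pre a := by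
  refine hs.add_eq_add (fun c _ b x' hx => ?_) fun c _ b y' hy => ?_
  · obtain ⟨rfl, rfl⟩ := stepTo_pre.1 hx
    exact ⟨s + y, (stepTo_pre.2 ⟨rfl, rfl⟩).add_left s, h ▸ c.refl _⟩
  · obtain ⟨rfl, rfl⟩ := stepTo_pre.1 hy
    exact ⟨s + x, (stepTo_pre.2 ⟨rfl, rfl⟩).add_left s, h ▸ c.refl _⟩

theorem Persistent.add_repl_eq_add_repl {s : BisimClass A} (hs : s.Persistent) (a : A)
    {p q : Proc A} (h : s + (Proc.repl a p).cls + p.cls = s + (Proc.repl a p).cls + q.cls) :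
    s + (Proc.repl a p).cls = s + (Proc.repl a q).cls := by
  refine hs.add_eq_add (fun c hc b x' hx => ?_) fun c hc b y' hy => ?_
  · obtain ⟨rfl, rfl⟩ := stepTo_repl.1 hx
    refine ⟨_, (stepTo_repl.2 ⟨rfl, rfl⟩).add_left s, ?_⟩
    rw [← add_assoc, ← add_assoc, h]
    exact c.add hc (c.refl _)
  · obtain ⟨rfl, rfl⟩ := stepTo_repl.1 hy
    refine ⟨_, (stepTo_repl.2 ⟨rfl, rfl⟩).add_left s, ?_⟩
    rw [← add_assoc, ← add_assoc, h]
    exact c.add (c.symm hc) (c.refl _)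

theorem repl_add_pre (a : A) (p : Proc A) :
    (Proc.repl a p).cls + p.cls.pre a = (Proc.repl a p).cls := by
  suffices (Proc.repl a p).cls + p.cls.pre a = (Proc.repl a p).cls + 0 by rwa [add_zero] at this
  refine (persistent_repl a p).add_eq_add (fun c _ b x' hx => ?_)
    fun _ _ _ _ h0 => absurd h0 not_stepTo_zero
  obtain ⟨rfl, rfl⟩ := stepTo_pre.1 hx
  exact ⟨_, (stepTo_repl.2 ⟨rfl, rfl⟩).add_right 0, by rw [add_zero]; exact c.refl _⟩

end BisimClass

/-! ### Finite classes -/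

theorem Step.isFin_and_size_eq {p p' : Proc A} {a : A} (h : Step p a p') (hp : p.IsFin) :
    p'.IsFin ∧ p.size = p'.size + 1 := by
  induction h with
  | pre => exact ⟨hp, rfl⟩
  | repl => exact hp.elim
  | parL q _ ih =>
    obtain ⟨hp', hsize⟩ := ih hp.1
    exact ⟨⟨hp', hp.2⟩, by simp only [Proc.size]; omega⟩
  | parR p _ ih =>
    obtain ⟨hq', hsize⟩ := ih hp.2
    exact ⟨⟨hp.1, hq'⟩, by simp only [Proc.size]; omega⟩

theorem Proc.exists_step_of_size_ne_zero {p : Proc A} (h : p.size ≠ 0) :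
    ∃ a p', Step p a p' := by
  induction p with
  | nil => exact absurd rfl h
  | pre a p => exact ⟨a, p, .pre⟩
  | repl a p => exact ⟨a, _, .repl⟩
  | par p q ihp ihq =>
    by_cases hp : p.size = 0
    · obtain ⟨a, q', hs⟩ := ihq (by simp only [Proc.size] at h; omega)
      exact ⟨a, _, .parR p hs⟩
    · obtain ⟨a, p', hs⟩ := ihp hp
      exact ⟨a, _, .parL q hs⟩

theorem Bisim.size_eq {p q : Proc A} (h : Bisim p q) (hp : p.IsFin) (hq : q.IsFin) :
    p.size = q.size := by
  induction hn : p.size generalizing p q with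
  | zero =>
    by_contra hq0
    obtain ⟨a, q', hs⟩ := Proc.exists_step_of_size_ne_zero (Ne.symm hq0)
    obtain ⟨p', hs', _⟩ := h.symm.exists_step hs
    have := (hs'.isFin_and_size_eq hp).2
    omega
  | succ n ih =>
    obtain ⟨a, p', hs⟩ := p.exists_step_of_size_ne_zero (by omega)
    obtain ⟨q', hs', h'⟩ := h.exists_step hs
    obtain ⟨hp', hpsize⟩ := hs.isFin_and_size_eq hp
    obtain ⟨hq', hqsize⟩ := hs'.isFin_and_size_eq hq
    have := ih h' hp' hq' (by omega)
    omega

theorem Proc.IsFin.pre {p : Proc A} (hp : p.IsFin) (a : A) : (Proc.pre a p).IsFin := hp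

/-- The submonoid of the bisimilarity classes of finite processes. -/
def finiteClasses (A : Type) : AddSubmonoid (BisimClass A) where
  carrier := {x | ∃ p : Proc A, p.IsFin ∧ p.cls = x}
  zero_mem' := ⟨.nil, trivial, rfl⟩
  add_mem' := by
    rintro _ _ ⟨p, hp, rfl⟩ ⟨q, hq, rfl⟩
    exact ⟨p.par q, ⟨hp, hq⟩, rfl⟩

/-- Bisimilarity classes of finite processes. -/
abbrev FinClass (A : Type) : Type := finiteClasses A

/-- The class of a finite process. -/
def Proc.IsFin.cls {p : Proc A} (hp : p.IsFin) : FinClass A := ⟨p.cls, p, hp, rfl⟩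

namespace FinClass

theorem exists_cls_eq (x : FinClass A) : ∃ (p : Proc A) (hp : p.IsFin), hp.cls = x := by
  obtain ⟨_, p, hp, rfl⟩ := x
  exact ⟨p, hp, rfl⟩

/-- The action prefix `a.x` on finite classes. -/
def pre (a : A) (x : FinClass A) : FinClass A :=
  ⟨x.1.pre a, by obtain ⟨p, hp, rfl⟩ := x.exists_cls_eq; exact (hp.pre a).cls.2⟩

/-- The number of prefixes, a bisimilarity invariant of finite processes. -/
noncomputable def size : FinClass A →+ ℕ where
  toFun x := x.2.choose.size
  map_zero' := (Proc.cls_eq_cls.1 (0 : FinClass A).2.choose_spec.2).size_eq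
    (0 : FinClass A).2.choose_spec.1 (q := .nil) trivial
  map_add' x y := (Proc.cls_eq_cls.1 ((x + y).2.choose_spec.2.trans
    (congrArg₂ (· + ·) x.2.choose_spec.2 y.2.choose_spec.2).symm)).size_eq
    (x + y).2.choose_spec.1 ⟨x.2.choose_spec.1, y.2.choose_spec.1⟩

theorem size_cls {p : Proc A} (hp : p.IsFin) : size hp.cls = p.size :=
  (Proc.cls_eq_cls.1 hp.cls.2.choose_spec.2).size_eq hp.cls.2.choose_spec.1 hp

theorem size_pre (a : A) (x : FinClass A) : size (pre a x) = size x + 1 := by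
  obtain ⟨p, hp, rfl⟩ := x.exists_cls_eq
  rw [size_cls hp]
  exact size_cls (hp.pre a)

theorem induction {motive : FinClass A → Prop} (zero : motive 0)
    (add : ∀ x y, motive x → motive y → motive (x + y))
    (pre : ∀ a x, motive x → motive (pre a x)) (x : FinClass A) : motive x := by
  obtain ⟨p, hp, rfl⟩ := x.exists_cls_eq
  induction p with
  | nil => exact zero
  | pre a p ih => exact pre a _ (ih hp)
  | par p q ihp ihq => exact add _ _ (ihp hp.1) (ihq hp.2)
  | repl a p => exact hp.elim

theorem pre_add_nsmul_pre (a : A) (x : FinClass A) (n : ℕ) :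
    pre a (x + n • pre a x) = (n + 1) • pre a x := by
  obtain ⟨p, hp, rfl⟩ := x.exists_cls_eq
  have h := (EqD.distr a p n hp).cls_eq
  rw [Proc.cls_pre, Proc.cls_par, Proc.cls_reps, Proc.cls_reps] at h
  exact Subtype.ext h

theorem exists_of_stepTo {x : FinClass A} {a : A} {z : BisimClass A} (h : x.1.StepTo a z) :
    ∃ y : FinClass A, y.1 = z ∧ size x = size y + 1 := by
  obtain ⟨p, hp, rfl⟩ := x.exists_cls_eq
  obtain ⟨p', hs, rfl⟩ := BisimClass.stepTo_cls.1 h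
  obtain ⟨hp', hsize⟩ := hs.isFin_and_size_eq hp
  exact ⟨hp'.cls, rfl, by rw [size_cls, size_cls, hsize]⟩

theorem stepTo_of_add_eq_add {x y : BisimClass A} {z z' : FinClass A} {a : A}
    (hcancel : ∀ w : FinClass A, size w < size z → ∀ u v, u + w.1 = v + w.1 → u = v)
    (hz : z.1.StepTo a z'.1) (h : x + z.1 = y + z'.1) : y.StepTo a x := by
  induction hn : size z using Nat.strong_induction_on generalizing z z' with
  | _ n ih =>
    obtain ⟨w, hw, hsize⟩ := exists_of_stepTo hz
    obtain rfl : w = z' := Subtype.ext hw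
    have hs : (y + w.1).StepTo a (x + w.1) := h ▸ hz.add_left x
    rcases BisimClass.stepTo_add.1 hs with ⟨y', hy, hxy⟩ | ⟨w', hw', hxy⟩
    · rwa [hcancel w (by omega) x y' hxy]
    · obtain ⟨w', rfl, -⟩ := exists_of_stepTo hw'
      exact ih (size w) (by omega) (fun v hv => hcancel v (by omega)) hw' hxy rfl

theorem add_right_cancel_of_finite {x y : BisimClass A} (z : FinClass A)
    (h : x + z.1 = y + z.1) : x = y := by
  induction hn : size z using Nat.strong_induction_on generalizing z x y with
  | _ n ih =>
    have simulated {c : AddCon (BisimClass A)} {u v : BisimClass A}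
        (hc : ∀ u' v', u' + z.1 = v' + z.1 → c u' v') (huv : u + z.1 = v + z.1) :
        BisimClass.SimulatedUpTo c u v := by
      intro a u' hu
      have hs : (v + z.1).StepTo a (u' + z.1) := huv ▸ hu.add_right z.1
      rcases BisimClass.stepTo_add.1 hs with ⟨v', hv, huv'⟩ | ⟨z', hz, huv'⟩
      · exact ⟨v', hv, hc _ _ huv'⟩
      · obtain ⟨z', rfl, -⟩ := exists_of_stepTo hz
        refine ⟨u', stepTo_of_add_eq_add ?_ hz huv', c.refl _⟩
        exact fun w hw _ _ hE => ih (size w) (hn ▸ hw) w hE rfl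
    let R : BisimClass A → BisimClass A → Prop := fun u v => u + z.1 = v + z.1
    have hR u v (huv : R u v) : addConGen R u v := AddConGen.Rel.of u v huv
    exact BisimClass.eq_of_simulatedUpTo (R := R)
      (fun u v huv => ⟨simulated hR huv, simulated hR huv.symm⟩) h

/-! ### Unique decomposition of finite classes -/

/-- The parallel composition of the prefixed processes `a.x` for `(a, x)` in a multiset. -/
def prefixSum : Multiset (A × FinClass A) →+ FinClass A :=
  Multiset.sumAddMonoidHom.comp (Multiset.mapAddMonoidHom fun c => pre c.1 c.2)

theorem prefixSum_singleton (c : A × FinClass A) : prefixSum {c} = pre c.1 c.2 :=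
  Multiset.sum_singleton _

theorem prefixSum_cons (c : A × FinClass A) (m : Multiset (A × FinClass A)) :
    prefixSum (c ::ₘ m) = pre c.1 c.2 + prefixSum m := by
  rw [← Multiset.singleton_add, map_add, prefixSum_singleton]

theorem size_snd_lt_of_mem {m : Multiset (A × FinClass A)} {c : A × FinClass A} (hc : c ∈ m) :
    size c.2 < size (prefixSum m) := by
  obtain ⟨m, rfl⟩ := Multiset.exists_cons_of_mem hc
  rw [prefixSum_cons, map_add, size_pre]
  omega

theorem stepTo_prefixSum {m : Multiset (A × FinClass A)} {a : A} {z : BisimClass A} :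
    (prefixSum m).1.StepTo a z ↔ ∃ x m₁, m = (a, x) ::ₘ m₁ ∧ z = (x + prefixSum m₁).1 := by
  constructor
  · induction m using Multiset.induction_on generalizing z with
    | empty => exact fun h => absurd h BisimClass.not_stepTo_zero
    | cons c m ih =>
      rw [prefixSum_cons]
      intro h
      rcases BisimClass.stepTo_add.1 h with ⟨x, hx, rfl⟩ | ⟨w, hw, rfl⟩
      · obtain ⟨rfl, rfl⟩ := BisimClass.stepTo_pre.1 hx
        exact ⟨c.2, m, rfl, rfl⟩
      · obtain ⟨x, m₁, rfl, rfl⟩ := ih hw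
        refine ⟨x, c ::ₘ m₁, Multiset.cons_swap _ _ _, ?_⟩
        rw [← AddSubmonoid.coe_add, prefixSum_cons, add_left_comm]
  · rintro ⟨x, m₁, rfl, rfl⟩
    rw [prefixSum_cons]
    exact (BisimClass.stepTo_pre.2 ⟨rfl, rfl⟩).add_right _

/-- The pairs `(a, x)` for which `a.x` is not the left-hand side `a.(y | a.y | ... | a.y)` of a
proper instance of the distribution law. -/
def IrreduciblePrefix (c : A × FinClass A) : Prop :=
  ∀ y n, c.2 ≠ y + (n + 1) • pre c.1 y

theorem exists_eq_add_nsmul_pre {c : A × FinClass A} (h : ¬ IrreduciblePrefix c) :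
    ∃ y n, size y < size c.2 ∧ c.2 = y + (n + 1) • pre c.1 y := by
  simp only [IrreduciblePrefix, not_forall, not_not] at h
  obtain ⟨y, n, hy⟩ := h
  refine ⟨y, n, ?_, hy⟩
  rw [hy, map_add, succ_nsmul, map_add, size_pre]
  omega

/-- `m` lists irreducible prefixes whose parallel composition is `x`. -/
def IsFactorization (m : Multiset (A × FinClass A)) (x : FinClass A) : Prop :=
  (∀ c ∈ m, IrreduciblePrefix c) ∧ prefixSum m = x

namespace IsFactorization

theorem zero : IsFactorization 0 (0 : FinClass A) := ⟨by simp, map_zero _⟩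

theorem singleton {c : A × FinClass A} (hc : IrreduciblePrefix c) :
    IsFactorization {c} (pre c.1 c.2) :=
  ⟨by simpa using hc, prefixSum_singleton c⟩

theorem add {m m' : Multiset (A × FinClass A)} {x x' : FinClass A} (h : IsFactorization m x)
    (h' : IsFactorization m' x') : IsFactorization (m + m') (x + x') :=
  ⟨fun c hc => (Multiset.mem_add.1 hc).elim (h.1 c) (h'.1 c), by rw [map_add, h.2, h'.2]⟩

theorem nsmul {m : Multiset (A × FinClass A)} {x : FinClass A} (h : IsFactorization m x) (n : ℕ) :
    IsFactorization (n • m) (n • x) :=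
  ⟨fun c hc => h.1 c (Multiset.mem_of_mem_nsmul hc), by rw [map_nsmul, h.2]⟩

theorem of_cons {m : Multiset (A × FinClass A)} {c : A × FinClass A} {x : FinClass A}
    (h : IsFactorization (c ::ₘ m) x) : IsFactorization m (prefixSum m) :=
  ⟨fun b hb => h.1 b (Multiset.mem_cons_of_mem hb), rfl⟩

end IsFactorization

theorem exists_isFactorization_pre (a : A) (x : FinClass A) :
    ∃ m, IsFactorization m (pre a x) := by
  induction hn : size x using Nat.strong_induction_on generalizing x with
  | _ n ih =>
    by_cases hirr : IrreduciblePrefix (a, x)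
    · exact ⟨_, .singleton hirr⟩
    · obtain ⟨y, k, hlt, hy⟩ := exists_eq_add_nsmul_pre hirr
      obtain ⟨m, hm⟩ := ih (size y) (hn ▸ hlt) y rfl
      refine ⟨(k + 1 + 1) • m, ?_⟩
      rw [show x = y + (k + 1) • pre a y from hy, pre_add_nsmul_pre]
      exact hm.nsmul _

theorem exists_isFactorization (x : FinClass A) : ∃ m, IsFactorization m x := by
  induction x using FinClass.induction with
  | zero => exact ⟨0, .zero⟩
  | add x y ihx ihy =>
    obtain ⟨m, hm⟩ := ihx
    obtain ⟨m', hm'⟩ := ihy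
    exact ⟨m + m', hm.add hm'⟩
  | pre a x _ => exact exists_isFactorization_pre a x

/-- A factorization of `x` into irreducible prefixes. -/
noncomputable def factors (x : FinClass A) : Multiset (A × FinClass A) :=
  (exists_isFactorization x).choose

theorem isFactorization_factors (x : FinClass A) : IsFactorization (factors x) x :=
  (exists_isFactorization x).choose_spec

theorem size_snd_lt_of_mem_factors {x : FinClass A} {c : A × FinClass A} (hc : c ∈ factors x) :
    size c.2 < size x := by
  conv_rhs => rw [← (isFactorization_factors x).2]
  exact size_snd_lt_of_mem hc

/-- All factorizations of classes smaller than `x` are unique: the induction hypothesis of unique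
decomposition. -/
def UniqueBelow (x : FinClass A) : Prop :=
  ∀ y : FinClass A, size y < size x → ∀ m m', IsFactorization m y → IsFactorization m' y → m = m'

theorem IsFactorization.exchange {x : FinClass A} (hx : UniqueBelow x) {c : A × FinClass A}
    {m m' : Multiset (A × FinClass A)} (h : IsFactorization (c ::ₘ m) x)
    (h' : IsFactorization m' x) :
    ∃ y m₁, m' = (c.1, y) ::ₘ m₁ ∧ factors c.2 + m = factors y + m₁ := by
  have hs : (prefixSum m').1.StepTo c.1 (c.2 + prefixSum m).1 := by
    rw [h'.2, ← h.2]
    exact stepTo_prefixSum.2 ⟨c.2, m, rfl, rfl⟩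
  obtain ⟨y, m₁, rfl, hy⟩ := stepTo_prefixSum.1 hs
  refine ⟨y, m₁, rfl, hx (c.2 + prefixSum m) ?_ _ _ ?_ ?_⟩
  · rw [← h.2, prefixSum_cons, map_add, map_add, size_pre]
    omega
  · exact (isFactorization_factors _).add h.of_cons
  · rw [Subtype.ext hy]
    exact (isFactorization_factors _).add h'.of_cons

theorem IsFactorization.eq_of_cons_cons_pre {c b b' : A × FinClass A}
    (hx : UniqueBelow (pre c.1 c.2)) (hc : IrreduciblePrefix c) {m : Multiset (A × FinClass A)}
    (h : IsFactorization (b ::ₘ b' ::ₘ m) (pre c.1 c.2)) : b = b' := by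
  have factors_eq {d : A × FinClass A} {m₁ : Multiset (A × FinClass A)}
      (hd : IsFactorization (d ::ₘ m₁) (pre c.1 c.2)) : factors d.2 + m₁ = factors c.2 := by
    obtain ⟨y, m₂, hm₂, hE⟩ := hd.exchange hx (.singleton hc)
    obtain ⟨rfl, rfl⟩ := (Multiset.singleton_eq_cons_iff _).1 hm₂
    rwa [add_zero] at hE
  have hb := factors_eq h
  rw [Multiset.cons_swap] at h
  have hE : b' ::ₘ factors b.2 = b ::ₘ factors b'.2 := by
    have := hb.trans (factors_eq h).symm
    rwa [Multiset.add_cons, Multiset.add_cons, ← Multiset.cons_add, ← Multiset.cons_add,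
      add_left_inj] at this
  rcases Multiset.mem_cons.1 (hE ▸ Multiset.mem_cons_self b _) with hbb' | hmem
  · exact hbb'
  · exact absurd (size_snd_lt_of_mem_factors hmem) (lt_irrefl _)

theorem IsFactorization.eq_singleton {c : A × FinClass A} (hx : UniqueBelow (pre c.1 c.2))
    (hc : IrreduciblePrefix c) {m : Multiset (A × FinClass A)}
    (h : IsFactorization m (pre c.1 c.2)) : m = {c} := by
  obtain ⟨y, m₁, rfl, -⟩ := (singleton hc).exchange (m := 0) hx h
  have hall : ∀ b ∈ m₁, b = (c.1, y) := by
    intro b hb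
    obtain ⟨m₂, rfl⟩ := Multiset.exists_cons_of_mem hb
    exact (h.eq_of_cons_cons_pre hx hc).symm
  obtain ⟨n, rfl⟩ : ∃ n, m₁ = Multiset.replicate n (c.1, y) :=
    ⟨_, Multiset.eq_replicate_card.2 hall⟩
  have hstep : (pre c.1 c.2).1.StepTo c.1 (y + n • pre c.1 y).1 := by
    rw [← h.2, stepTo_prefixSum]
    refine ⟨y, _, rfl, ?_⟩
    rw [← Multiset.nsmul_singleton, map_nsmul, prefixSum_singleton]
  have hcy : c.2 = y + n • pre c.1 y := (Subtype.ext (BisimClass.stepTo_pre.1 hstep).2).symm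
  cases n with
  | zero => rw [zero_nsmul, add_zero] at hcy; rw [← hcy]; rfl
  | succ n => exact absurd hcy (hc y n)

/-- The transition of another factor of `m` would leave `c` in the target, where `m'` cannot
produce it. -/
theorem IsFactorization.eq_singleton_of_maximal {x : FinClass A} (hx : UniqueBelow x)
    {c : A × FinClass A} {m m' : Multiset (A × FinClass A)} (h : IsFactorization m x)
    (h' : IsFactorization m' x) (hcm : c ∈ m) (hcm' : c ∉ m')
    (hmax : ∀ d ∈ m', size d.2 ≤ size c.2) : m = {c} := by
  obtain ⟨m₁, rfl⟩ := Multiset.exists_cons_of_mem hcm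
  rcases m₁.empty_or_exists_mem with rfl | ⟨b, hb⟩
  · rfl
  obtain ⟨m₂, rfl⟩ := Multiset.exists_cons_of_mem hb
  rw [Multiset.cons_swap] at h
  obtain ⟨y, m₁', rfl, hE⟩ := h.exchange hx h'
  have hc : c ∈ factors y + m₁' := hE ▸ Multiset.mem_add.2 (.inr (Multiset.mem_cons_self c m₂))
  rcases Multiset.mem_add.1 hc with hc | hc
  · exact absurd (size_snd_lt_of_mem_factors hc) (hmax _ (Multiset.mem_cons_self _ _)).not_gt
  · exact absurd (Multiset.mem_cons_of_mem hc) hcm'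

theorem IsFactorization.eq_of_maximal {x : FinClass A} (hx : UniqueBelow x)
    {c : A × FinClass A} {m m' : Multiset (A × FinClass A)} (h : IsFactorization m x)
    (h' : IsFactorization m' x) (hcm : c ∈ m) (hmax : ∀ d ∈ m', size d.2 ≤ size c.2) :
    m = m' := by
  by_cases hcm' : c ∈ m'
  · obtain ⟨m₁, rfl⟩ := Multiset.exists_cons_of_mem hcm
    obtain ⟨m₁', rfl⟩ := Multiset.exists_cons_of_mem hcm'
    have hE : prefixSum m₁ = prefixSum m₁' := by
      have hE := h.2.trans h'.2.symm
      rw [prefixSum_cons, prefixSum_cons, add_comm, add_comm (pre _ _)] at hE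
      exact Subtype.ext (add_right_cancel_of_finite _ (congrArg Subtype.val hE))
    rw [hx (prefixSum m₁) ?_ m₁ m₁' h.of_cons (hE ▸ h'.of_cons)]
    rw [← h.2, prefixSum_cons, map_add, size_pre]
    omega
  · obtain rfl := h.eq_singleton_of_maximal hx h' hcm hcm' hmax
    obtain rfl : pre c.1 c.2 = x := (prefixSum_singleton c).symm.trans h.2
    exact (h'.eq_singleton hx (h.1 c hcm)).symm

theorem IsFactorization.unique {x : FinClass A} {m m' : Multiset (A × FinClass A)}
    (h : IsFactorization m x) (h' : IsFactorization m' x) : m = m' := by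
  induction hn : size x using Nat.strong_induction_on generalizing x m m' with
  | _ n ih =>
    have hx : UniqueBelow x := fun y hy _ _ hm hm' => ih (size y) (hn ▸ hy) hm hm' rfl
    by_cases h0 : m + m' = 0
    · rw [add_eq_zero] at h0
      rw [h0.1, h0.2]
    obtain ⟨c, hc, hmax⟩ := Multiset.exists_max_image (fun d : A × FinClass A => size d.2)
      h0
    rcases Multiset.mem_add.1 hc with hc | hc
    · exact h.eq_of_maximal hx h' hc fun d hd => hmax d (Multiset.mem_add.2 (.inr hd))
    · exact (h'.eq_of_maximal hx h hc fun d hd => hmax d (Multiset.mem_add.2 (.inl hd))).symm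

end FinClass

/-! ### Completeness of `≡D` for finite processes -/

instance eqDSetoid (A : Type) : Setoid {p : Proc A // p.IsFin} where
  r p q := EqD p.1 q.1
  iseqv := ⟨fun p => .refl p.1, .symm, .trans⟩

/-- Finite processes modulo `≡D`; an additive commutative monoid under parallel composition. -/
def EqDClass (A : Type) : Type := Quotient (eqDSetoid A)

/-- The `≡D`-class of a finite process. -/
def Proc.IsFin.eqDClass {p : Proc A} (hp : p.IsFin) : EqDClass A := Quotient.mk _ ⟨p, hp⟩

theorem Proc.IsFin.eqDClass_eq_iff {p q : Proc A} (hp : p.IsFin) (hq : q.IsFin) :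
    hp.eqDClass = hq.eqDClass ↔ EqD p q :=
  Quotient.eq

namespace EqDClass

instance : Zero (EqDClass A) := ⟨Proc.IsFin.eqDClass (p := .nil) trivial⟩

instance : Add (EqDClass A) :=
  ⟨Quotient.map₂ (fun p q => ⟨p.1.par q.1, p.2, q.2⟩) fun _ _ hp _ _ hq => .congPar hp hq⟩

instance : AddCommMonoid (EqDClass A) where
  add_assoc := by rintro ⟨p⟩ ⟨q⟩ ⟨r⟩; exact Quotient.sound (EqD.parAssoc p.1 q.1 r.1)
  zero_add := by rintro ⟨p⟩; exact Quotient.sound (EqD.nilPar p.1)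
  add_zero := by rintro ⟨p⟩; exact Quotient.sound (EqD.parNil p.1)
  add_comm := by rintro ⟨p⟩ ⟨q⟩; exact Quotient.sound (EqD.parComm p.1 q.1)
  nsmul := nsmulRec

/-- The action prefix `a.x` on `≡D`-classes. -/
def pre (a : A) : EqDClass A → EqDClass A :=
  Quotient.map (fun p => ⟨.pre a p.1, p.2⟩) fun _ _ h => .congPre a h

end EqDClass

theorem Proc.IsFin.reps {p : Proc A} (hp : p.IsFin) (n : ℕ) : (Proc.reps n p).IsFin := by
  induction n with
  | zero => trivial
  | succ n ih => exact ⟨hp, ih⟩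

theorem Proc.IsFin.eqDClass_reps {p : Proc A} (hp : p.IsFin) (n : ℕ) :
    (hp.reps n).eqDClass = n • hp.eqDClass := by
  induction n with
  | zero => rw [zero_nsmul]; rfl
  | succ n ih => rw [succ_nsmul', ← ih]; rfl

theorem EqDClass.pre_add_nsmul_pre (a : A) (x : EqDClass A) (n : ℕ) :
    (x + n • x.pre a).pre a = (n + 1) • x.pre a := by
  obtain ⟨⟨p, hp⟩⟩ := x
  change (hp.eqDClass + n • (hp.pre a).eqDClass).pre a = (n + 1) • (hp.pre a).eqDClass
  rw [← Proc.IsFin.eqDClass_reps, ← Proc.IsFin.eqDClass_reps]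
  exact Quotient.sound (EqD.distr a p n hp)

namespace FinClass

theorem factors_zero : factors (0 : FinClass A) = 0 :=
  (isFactorization_factors 0).unique .zero

theorem factors_add (x y : FinClass A) : factors (x + y) = factors x + factors y :=
  (isFactorization_factors _).unique ((isFactorization_factors x).add (isFactorization_factors y))

theorem factors_pre {c : A × FinClass A} (hc : IrreduciblePrefix c) :
    factors (pre c.1 c.2) = {c} :=
  (isFactorization_factors _).unique (.singleton hc)

/-- The normal form of a finite class modulo `≡D`, read off its irreducible factors. -/
noncomputable def normalForm (x : FinClass A) : EqDClass A :=
  ((factors x).attach.map fun c => (normalForm c.1.2).pre c.1.1).sum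
termination_by size x
decreasing_by exact size_snd_lt_of_mem_factors c.2

theorem normalForm_eq_sum (x : FinClass A) :
    normalForm x = ((factors x).map fun c => (normalForm c.2).pre c.1).sum := by
  rw [normalForm, Multiset.attach_map_val' (factors x) fun c => (normalForm c.2).pre c.1]

/-- `normalForm` as a monoid homomorphism. -/
noncomputable def normalFormHom : FinClass A →+ EqDClass A where
  toFun := normalForm
  map_zero' := by rw [normalForm_eq_sum, factors_zero, Multiset.map_zero, Multiset.sum_zero]
  map_add' x y := by
    rw [normalForm_eq_sum, factors_add, Multiset.map_add, Multiset.sum_add, ← normalForm_eq_sum,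
      ← normalForm_eq_sum]

theorem normalFormHom_pre (a : A) (x : FinClass A) :
    normalFormHom (pre a x) = (normalFormHom x).pre a := by
  induction hn : size x using Nat.strong_induction_on generalizing x with
  | _ n ih =>
    by_cases hirr : IrreduciblePrefix (a, x)
    · change normalForm (pre a x) = _
      rw [normalForm_eq_sum, factors_pre hirr, Multiset.map_singleton, Multiset.sum_singleton]
      rfl
    · obtain ⟨y, k, hlt, hy⟩ := exists_eq_add_nsmul_pre hirr
      obtain rfl : x = y + (k + 1) • pre a y := hy
      rw [pre_add_nsmul_pre, map_nsmul, map_add, map_nsmul, ih (size y) (hn ▸ hlt) y rfl,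
        EqDClass.pre_add_nsmul_pre]

theorem normalFormHom_cls {p : Proc A} (hp : p.IsFin) : normalFormHom hp.cls = hp.eqDClass := by
  induction p with
  | nil => exact map_zero normalFormHom
  | pre a p ih => exact (normalFormHom_pre a (Proc.IsFin.cls (p := p) hp)).trans (ih hp ▸ rfl)
  | par p q ihp ihq =>
    exact (map_add normalFormHom hp.1.cls hp.2.cls).trans (ihp hp.1 ▸ ihq hp.2 ▸ rfl)
  | repl a p => exact hp.elim

end FinClass

theorem Bisim.eqD_of_isFin {p q : Proc A} (h : Bisim p q) (hp : p.IsFin) (hq : q.IsFin) :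
    EqD p q := by
  have hcls : hp.cls = hq.cls := Subtype.ext (Proc.cls_eq_cls.2 h)
  rw [← hp.eqDClass_eq_iff hq, ← FinClass.normalFormHom_cls, hcls, FinClass.normalFormHom_cls]

/-! ### Prefixed subterms -/

/-- The pairs `(a, p)` such that `a.p` is a subterm; the prefix of a replication `!a.p` is not
counted. -/
def Proc.prefixes : Proc A → Set (A × Proc A)
  | nil => ∅
  | pre a p => insert (a, p) p.prefixes
  | par p q => p.prefixes ∪ q.prefixes
  | repl _ p => p.prefixes

theorem Step.prefixes_subset {p p' : Proc A} {a : A} (h : Step p a p') :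
    p'.prefixes ⊆ p.prefixes := by
  induction h with
  | pre => exact Set.subset_insert _ _
  | repl => exact Set.union_subset subset_rfl subset_rfl
  | parL _ _ ih => exact Set.union_subset_union_left _ ih
  | parR _ _ ih => exact Set.union_subset_union_right _ ih

namespace Proc

theorem IsFin.wf {p : Proc A} (hp : p.IsFin) : p.Wf := by
  induction p with
  | nil => trivial
  | pre a p => exact hp
  | par p q ihp ihq => exact ⟨ihp hp.1, ihq hp.2⟩
  | repl a p => exact hp.elim

theorem size_lt_of_mem_prefixes {p R : Proc A} {a : A} (h : (a, R) ∈ p.prefixes) :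
    R.size < p.size := by
  induction p with
  | nil => exact h.elim
  | pre b p ih =>
    rcases h with hE | h
    · obtain ⟨rfl, rfl⟩ := Prod.mk.inj hE
      exact Nat.lt_succ_self _
    · exact (ih h).trans (Nat.lt_succ_self _)
  | par p q ihp ihq =>
    rcases h with h | h
    · exact (ihp h).trans_le (Nat.le_add_right _ _)
    · exact (ihq h).trans_le (Nat.le_add_left _ _)
  | repl b p ih => exact (ih h).trans (Nat.lt_succ_self _)

theorem prefixes_subset_of_mem_prefixes {p R : Proc A} {a : A} (h : (a, R) ∈ p.prefixes) :
    R.prefixes ⊆ p.prefixes := by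
  induction p with
  | nil => exact h.elim
  | pre b p ih =>
    rcases h with hE | h
    · obtain ⟨rfl, rfl⟩ := Prod.mk.inj hE
      exact Set.subset_insert _ _
    · exact (ih h).trans (Set.subset_insert _ _)
  | par p q ihp ihq =>
    rcases h with h | h
    · exact (ihp h).trans Set.subset_union_left
    · exact (ihq h).trans Set.subset_union_right
  | repl b p ih => exact ih h

theorem IsFin.of_mem_prefixes {p R : Proc A} {a : A} (hp : p.IsFin) (h : (a, R) ∈ p.prefixes) :
    R.IsFin := by
  induction p with
  | nil => exact h.elim
  | pre b p ih =>
    rcases h with hE | h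
    · obtain ⟨rfl, rfl⟩ := Prod.mk.inj hE
      exact hp
    · exact ih hp h
  | par p q ihp ihq => exact h.elim (ihp hp.1) (ihq hp.2)
  | repl b p => exact hp.elim

theorem Wf.isFin_of_mem_prefixes {p R : Proc A} {a : A} (hp : p.Wf) (h : (a, R) ∈ p.prefixes) :
    R.IsFin := by
  induction p with
  | nil => exact h.elim
  | pre b p => exact IsFin.of_mem_prefixes (p := .pre b p) hp h
  | par p q ihp ihq => exact h.elim (ihp hp.1) (ihq hp.2)
  | repl b p => exact IsFin.of_mem_prefixes (p := p) hp h

/-- Next to `!a.R`, an occurrence of `a.R` can be erased. -/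
theorem exists_smaller_of_mem_prefixes {p R : Proc A} {a : A} (h : (a, R) ∈ p.prefixes) :
    ∃ p' : Proc A, p'.size < p.size ∧ (p.IsFin → p'.IsFin) ∧ (p.Wf → p'.Wf) ∧
      (repl a R).cls + p'.cls = (repl a R).cls + p.cls := by
  induction p with
  | nil => exact h.elim
  | pre b p ih =>
    rcases h with hE | h
    · obtain ⟨rfl, rfl⟩ := Prod.mk.inj hE
      refine ⟨nil, Nat.succ_pos _, fun _ => trivial, fun _ => trivial, ?_⟩
      rw [cls_nil, add_zero, cls_pre, BisimClass.repl_add_pre]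
    · obtain ⟨p', hlt, hfin, -, hcls⟩ := ih h
      exact ⟨pre b p', Nat.succ_lt_succ hlt, hfin, hfin,
        (BisimClass.persistent_repl a R).add_pre_eq_add_pre b hcls⟩
  | par p q ihp ihq =>
    rcases h with h | h
    · obtain ⟨p', hlt, hfin, hwf, hcls⟩ := ihp h
      refine ⟨p'.par q, Nat.add_lt_add_right hlt _, .imp_left hfin, .imp_left hwf, ?_⟩
      rw [cls_par, cls_par, ← add_assoc, hcls, add_assoc]
    · obtain ⟨q', hlt, hfin, hwf, hcls⟩ := ihq h
      refine ⟨p.par q', Nat.add_lt_add_left hlt _, .imp_right hfin, .imp_right hwf, ?_⟩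
      rw [cls_par, cls_par, add_left_comm, hcls, add_left_comm]
  | repl b p ih =>
    obtain ⟨p', hlt, hfin, -, hcls⟩ := ih h
    refine ⟨repl b p', Nat.succ_lt_succ hlt, False.elim, hfin,
      ((BisimClass.persistent_repl a R).add_repl_eq_add_repl b ?_).symm⟩
    rw [add_right_comm, ← hcls, add_right_comm]

/-- Finite processes all of whose prefixed subterms occur in `S`, such as those spawned by `S`. -/
def IsFinOver (T S : Proc A) : Prop :=
  T.IsFin ∧ T.prefixes ⊆ S.prefixes

theorem IsFinOver.of_mem_prefixes {S R : Proc A} {a : A} (hS : S.Wf) (h : (a, R) ∈ S.prefixes) :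
    R.IsFinOver S :=
  ⟨hS.isFin_of_mem_prefixes h, prefixes_subset_of_mem_prefixes h⟩

theorem IsFinOver.par {S T U : Proc A} (hT : T.IsFinOver S) (hU : U.IsFinOver S) :
    (T.par U).IsFinOver S :=
  ⟨⟨hT.1, hU.1⟩, Set.union_subset hT.2 hU.2⟩

theorem IsFinOver.step {S T T' : Proc A} {a : A} (hT : T.IsFinOver S) (h : Step T a T') :
    T'.IsFinOver S :=
  ⟨(h.isFin_and_size_eq hT.1).1, h.prefixes_subset.trans hT.2⟩

theorem cls_eq_zero_of_size_eq_zero {p : Proc A} (h : p.size = 0) : p.cls = 0 := by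
  induction p with
  | nil => rfl
  | pre a p => exact absurd h (Nat.succ_ne_zero _)
  | par p q ihp ihq =>
    obtain ⟨hp, hq⟩ := Nat.add_eq_zero_iff.1 h
    rw [cls_par, ihp hp, ihq hq, add_zero]
  | repl a p => exact absurd h (Nat.succ_ne_zero _)

theorem IsFin.exists_cls_eq_pre_add {T : Proc A} (hT : T.IsFin) (hsize : T.size ≠ 0) :
    ∃ a R u, (a, R) ∈ T.prefixes ∧ T.cls = R.cls.pre a + u := by
  induction T with
  | nil => exact absurd rfl hsize
  | pre a p => exact ⟨a, p, 0, Set.mem_insert _ _, (add_zero _).symm⟩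
  | par p q ihp ihq =>
    by_cases hp : p.size = 0
    · obtain ⟨a, R, u, hmem, hcls⟩ := ihq hT.2 (by simp only [size] at hsize; omega)
      refine ⟨a, R, p.cls + u, .inr hmem, ?_⟩
      rw [cls_par, hcls, add_left_comm]
    · obtain ⟨a, R, u, hmem, hcls⟩ := ihp hT.1 hp
      refine ⟨a, R, u + q.cls, .inl hmem, ?_⟩
      rw [cls_par, hcls, add_assoc]
  | repl a p => exact hT.elim

end Proc

/-! ### Replicated components -/

theorem ReplOnly.wf {S : Proc A} (hS : ReplOnly S) : S.Wf := by
  induction S with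
  | nil => trivial
  | pre a p => exact hS.elim
  | par p q ihp ihq => exact ⟨ihp hS.1, ihq hS.2⟩
  | repl a p => exact hS

theorem ReplOnly.exists_topRepl {S : Proc A} (hS : ReplOnly S) {a : A} {z : BisimClass A}
    (h : S.cls.StepTo a z) : ∃ G, TopRepl S a G ∧ z = S.cls + G.cls := by
  induction S generalizing z with
  | nil => exact absurd h BisimClass.not_stepTo_zero
  | pre b p => exact hS.elim
  | par p q ihp ihq =>
    rw [Proc.cls_par] at h
    rcases BisimClass.stepTo_add.1 h with ⟨x, hx, rfl⟩ | ⟨y, hy, rfl⟩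
    · obtain ⟨G, hG, rfl⟩ := ihp hS.1 hx
      exact ⟨G, .parL q hG, add_right_comm _ _ _⟩
    · obtain ⟨G, hG, rfl⟩ := ihq hS.2 hy
      exact ⟨G, .parR p hG, (add_assoc _ _ _).symm⟩
  | repl b p =>
    obtain ⟨rfl, rfl⟩ := BisimClass.stepTo_repl.1 h
    exact ⟨p, .repl a p, rfl⟩

theorem ReplOnly.persistent {S : Proc A} (hS : ReplOnly S) : S.cls.Persistent := by
  intro a z h
  obtain ⟨G, -, rfl⟩ := hS.exists_topRepl h
  exact ⟨G.cls, rfl⟩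

theorem TopRepl.isFinOver {S G : Proc A} {a : A} (h : TopRepl S a G) (hS : ReplOnly S) :
    G.IsFinOver S := by
  induction h with
  | repl a p => exact ⟨hS, subset_rfl⟩
  | parL q _ ih => exact ⟨(ih hS.1).1, (ih hS.1).2.trans Set.subset_union_left⟩
  | parR p _ ih => exact ⟨(ih hS.2).1, (ih hS.2).2.trans Set.subset_union_right⟩

theorem TopRepl.exists_split {S G : Proc A} {a : A} (h : TopRepl S a G) (hS : ReplOnly S) :
    ∃ S₀, ReplOnly S₀ ∧ S.cls = S₀.cls + (Proc.repl a G).cls ∧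
      S.size = S₀.size + (G.size + 1) ∧ S.prefixes = S₀.prefixes ∪ G.prefixes := by
  induction h with
  | repl a p =>
    exact ⟨.nil, trivial, (zero_add _).symm, (Nat.zero_add _).symm, (Set.empty_union _).symm⟩
  | parL q _ ih =>
    obtain ⟨S₀, hS₀, hcls, hsize, hpref⟩ := ih hS.1
    refine ⟨S₀.par q, ⟨hS₀, hS.2⟩, ?_, ?_, ?_⟩
    · rw [Proc.cls_par, Proc.cls_par, hcls, add_right_comm]
    · rw [Proc.size, Proc.size, hsize, add_right_comm]
    · rw [Proc.prefixes, Proc.prefixes, hpref, Set.union_right_comm]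
  | parR p _ ih =>
    obtain ⟨S₀, hS₀, hcls, hsize, hpref⟩ := ih hS.2
    refine ⟨p.par S₀, ⟨hS.1, hS₀⟩, ?_, ?_, ?_⟩
    · rw [Proc.cls_par, Proc.cls_par, hcls, add_assoc]
    · rw [Proc.size, Proc.size, hsize, add_assoc]
    · rw [Proc.prefixes, Proc.prefixes, hpref, Set.union_assoc]

/-! ### Seeds -/

theorem IsSeed.size_le_of_cls_eq {S p : Proc A} (h : IsSeed S) (hp : p.Wf)
    (hcls : p.cls = S.cls) : S.size ≤ p.size :=
  h.2 p hp (Proc.cls_eq_cls.1 hcls)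

/-- Otherwise `!a.G` could be replaced by the no larger `!a.R`, which in turn makes the occurrence
of `a.R` redundant. -/
theorem IsSeed.size_lt_of_add_eq_add {S : Proc A} (hseed : IsSeed S) (hS : ReplOnly S)
    {a : A} {G R : Proc A} (hG : TopRepl S a G) (hR : (a, R) ∈ S.prefixes)
    (h : S.cls + G.cls = S.cls + R.cls) : G.size < R.size := by
  have hRfin : R.IsFin := hseed.1.isFin_of_mem_prefixes hR
  obtain ⟨S₀, hS₀, hcls, hsize, hpref⟩ := hG.exists_split hS
  have hreplace : S₀.cls + (Proc.repl a R).cls = S.cls := by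
    rw [hcls] at h ⊢
    exact (hS₀.persistent.add_repl_eq_add_repl a h).symm
  rw [hpref] at hR
  rcases hR with hR | hR
  · obtain ⟨S₁, hlt, -, hwf, hcls₁⟩ := Proc.exists_smaller_of_mem_prefixes hR
    rw [add_comm, ← hcls₁, add_comm] at hreplace
    have hle := hseed.size_le_of_cls_eq (p := S₁.par (.repl a R)) ⟨hwf hS₀.wf, hRfin⟩ hreplace
    simp only [Proc.size] at hle
    omega
  · have hlt := Proc.size_lt_of_mem_prefixes hR
    have hle := hseed.size_le_of_cls_eq (p := S₀.par (.repl a R)) ⟨hS₀.wf, hRfin⟩ hreplace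
    simp only [Proc.size] at hle
    omega

/-- Let `F` run to termination: each of its transitions consumes at most one prefix of `T`. -/
theorem ReplOnly.exists_add_eq_self {S F T : Proc A} (hS : ReplOnly S) (hF : F.IsFin)
    (hT : T.IsFinOver S) {u : BisimClass A} (h : S.cls + F.cls = S.cls + (T.cls + u)) :
    ∃ T' : Proc A, T'.IsFinOver S ∧ S.cls + T'.cls = S.cls ∧ T.size ≤ T'.size + F.size ∧
      T'.size ≤ T.size := by
  induction hn : F.size generalizing F T u with
  | zero =>
    rw [Proc.cls_eq_zero_of_size_eq_zero hn, add_zero] at h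
    exact ⟨T, hT, hS.persistent.add_eq_self_of_add_add_eq_self h.symm, le_rfl, le_rfl⟩
  | succ n ih =>
    obtain ⟨a, F', hstep⟩ := F.exists_step_of_size_ne_zero (by omega)
    obtain ⟨hF', hsize⟩ := hstep.isFin_and_size_eq hF
    have hs : (S.cls + (T.cls + u)).StepTo a (S.cls + F'.cls) := h ▸ hstep.stepTo.add_left S.cls
    rcases BisimClass.stepTo_add.1 hs with ⟨z, hz, hE⟩ | ⟨z, hz, hE⟩
    · obtain ⟨G, -, rfl⟩ := hS.exists_topRepl hz
      obtain ⟨T', hT', habs, hle, hle'⟩ :=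
        ih (u := u + G.cls) hF' hT (by rw [hE]; abel) (by omega)
      exact ⟨T', hT', habs, by omega, hle'⟩
    rcases BisimClass.stepTo_add.1 hz with ⟨t, ht, rfl⟩ | ⟨v, -, rfl⟩
    · obtain ⟨T₁, hT₁, rfl⟩ := BisimClass.stepTo_cls.1 ht
      have hTsize := (hT₁.isFin_and_size_eq hT.1).2
      obtain ⟨T', hT', habs, hle, hle'⟩ := ih hF' (hT.step hT₁) hE (by omega)
      exact ⟨T', hT', habs, by omega, by omega⟩
    · obtain ⟨T', hT', habs, hle, hle'⟩ := ih hF' hT hE (by omega)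
      exact ⟨T', hT', habs, by omega, hle'⟩

theorem ReplOnly.exists_add_pre_eq_self {S T : Proc A} (hS : ReplOnly S) (hT : T.IsFinOver S)
    (hsize : T.size ≠ 0) (h : S.cls + T.cls = S.cls) :
    ∃ a R, (a, R) ∈ S.prefixes ∧ R.size < T.size ∧ S.cls + R.cls.pre a = S.cls := by
  obtain ⟨a, R, u, hmem, hcls⟩ := hT.1.exists_cls_eq_pre_add hsize
  rw [hcls] at h
  exact ⟨a, R, hT.2 hmem, Proc.size_lt_of_mem_prefixes hmem,
    hS.persistent.add_eq_self_of_add_add_eq_self h⟩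

theorem IsSeed.add_pre_ne_self {S R : Proc A} {a : A} (hseed : IsSeed S) (hS : ReplOnly S)
    (hR : (a, R) ∈ S.prefixes) : S.cls + R.cls.pre a ≠ S.cls := by
  induction hn : R.size using Nat.strong_induction_on generalizing a R with
  | _ n ih =>
    intro habs
    have hs : S.cls.StepTo a (S.cls + R.cls) := by
      rw [← congrArg (BisimClass.StepTo · a) habs]
      exact (BisimClass.stepTo_pre.2 ⟨rfl, rfl⟩).add_left S.cls
    obtain ⟨G, hG, hGR⟩ := hS.exists_topRepl hs
    have hlt := hseed.size_lt_of_add_eq_add hS hG hR hGR.symm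
    obtain ⟨T, hT, hTabs, hle, hle'⟩ := hS.exists_add_eq_self (u := 0) (hG.isFinOver hS).1
      (.of_mem_prefixes hseed.1 hR) (by rw [add_zero, hGR])
    obtain ⟨b, R', hR', hlt', habs'⟩ := hS.exists_add_pre_eq_self hT (by omega) hTabs
    exact ih R'.size (by omega) hR' rfl habs'

theorem IsSeed.size_eq_zero_of_add_eq_self {S T : Proc A} (hseed : IsSeed S) (hS : ReplOnly S)
    (hT : T.IsFinOver S) (h : S.cls + T.cls = S.cls) : T.size = 0 := by
  by_contra hsize
  obtain ⟨a, R, hR, -, habs⟩ := hS.exists_add_pre_eq_self hT hsize h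
  exact hseed.add_pre_ne_self hS hR habs

theorem IsSeed.size_le_of_add_eq_add {S T₁ T₂ : Proc A} (hseed : IsSeed S) (hS : ReplOnly S)
    (hT₁ : T₁.IsFin) (hT₂ : T₂.IsFinOver S) (h : S.cls + T₁.cls = S.cls + T₂.cls) :
    T₂.size ≤ T₁.size := by
  obtain ⟨T, hT, habs, hle, -⟩ := hS.exists_add_eq_self (u := 0) hT₁ hT₂ (by rw [add_zero, h])
  have := hseed.size_eq_zero_of_add_eq_self hS hT habs
  omega

theorem IsSeed.bisim_of_add_eq_add {S T₁ T₂ : Proc A} (hseed : IsSeed S) (hS : ReplOnly S)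
    (hT₁ : T₁.IsFinOver S) (hT₂ : T₂.IsFinOver S) (h : S.cls + T₁.cls = S.cls + T₂.cls) :
    Bisim T₁ T₂ := by
  refine ⟨fun T₁ T₂ => T₁.IsFinOver S ∧ T₂.IsFinOver S ∧ S.cls + T₁.cls = S.cls + T₂.cls,
    ⟨fun _ _ ⟨h₁, h₂, hE⟩ => ⟨h₂, h₁, hE.symm⟩, ?_⟩, hT₁, hT₂, h⟩
  rintro T₁ T₂ ⟨hT₁, hT₂, h⟩ a T₁' hstep
  have hs : (S.cls + T₂.cls).StepTo a (S.cls + T₁'.cls) := h ▸ hstep.stepTo.add_left S.cls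
  rcases BisimClass.stepTo_add.1 hs with ⟨z, hz, hE⟩ | ⟨z, hz, hE⟩
  · obtain ⟨G, hG, rfl⟩ := hS.exists_topRepl hz
    obtain ⟨hT₁', hsize⟩ := hstep.isFin_and_size_eq hT₁.1
    have hle := hseed.size_le_of_add_eq_add hS hT₂.1 hT₁ h.symm
    have hle' := hseed.size_le_of_add_eq_add hS hT₁' ((hG.isFinOver hS).par hT₂)
      (by rw [hE, Proc.cls_par, add_assoc])
    simp only [Proc.size] at hle'
    omega
  · obtain ⟨T₂', hstep', rfl⟩ := BisimClass.stepTo_cls.1 hz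
    exact ⟨T₂', hstep', hT₁.step hstep, hT₂.step hstep', hE⟩

/-! ### Processes spawned by a seed -/

/-- The parallel composition of the non-replicated components of a process. -/
def Proc.finPart : Proc A → Proc A
  | nil => nil
  | pre a p => pre a p
  | par p q => par p.finPart q.finPart
  | repl _ _ => nil

theorem Proc.finPart_of_isFin {p : Proc A} (hp : p.IsFin) : p.finPart = p := by
  induction p with
  | nil => rfl
  | pre a p => rfl
  | par p q ihp ihq => rw [finPart, ihp hp.1, ihq hp.2]
  | repl a p => exact hp.elim

theorem Proc.prefixes_finPart_subset (p : Proc A) : p.finPart.prefixes ⊆ p.prefixes := by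
  induction p with
  | nil | pre a p => exact subset_rfl
  | par p q ihp ihq => exact Set.union_subset_union ihp ihq
  | repl a p => exact Set.empty_subset _

theorem Proc.Wf.isFin_finPart {p : Proc A} (hp : p.Wf) : p.finPart.IsFin := by
  induction p with
  | nil | repl a p => trivial
  | pre a p => exact hp
  | par p q ihp ihq => exact ⟨ihp hp.1, ihq hp.2⟩

theorem ReplOnly.finPart_eqD_nil {S : Proc A} (hS : ReplOnly S) : EqD S.finPart .nil := by
  induction S with
  | nil | repl a p => exact .refl _
  | pre a p => exact hS.elim
  | par p q ihp ihq => exact (EqD.congPar (ihp hS.1) (ihq hS.2)).trans (.parNil _)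

theorem EqD.finPart {p q : Proc A} (h : EqD p q) : EqD p.finPart q.finPart := by
  induction h with
  | refl p => exact .refl _
  | symm _ ih => exact ih.symm
  | trans _ _ ih ih' => exact ih.trans ih'
  | parComm p q => exact .parComm _ _
  | parAssoc p q r => exact .parAssoc _ _ _
  | parNil p => exact .parNil _
  | distr a F n hF =>
    rw [Proc.finPart_of_isFin ((hF.pre a).reps (n + 1))]
    exact .distr a F n hF
  | congPre a h _ => exact .congPre a h
  | congPar _ _ ih ih' => exact .congPar ih ih'
  | congRepl a _ _ => exact .refl _

theorem Step.wf {p p' : Proc A} {a : A} (h : Step p a p') (hp : p.Wf) : p'.Wf := by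
  induction h with
  | pre => exact Proc.IsFin.wf hp
  | repl => exact ⟨hp, Proc.IsFin.wf hp⟩
  | parL _ _ ih => exact ⟨ih hp.1, hp.2⟩
  | parR _ _ ih => exact ⟨hp.1, ih hp.2⟩

theorem NSteps.wf_and_prefixes_subset {p q : Proc A} {k : ℕ} (h : NSteps p k q) (hp : p.Wf) :
    q.Wf ∧ q.prefixes ⊆ p.prefixes := by
  induction h with
  | zero p => exact ⟨hp, subset_rfl⟩
  | succ hs _ ih =>
    obtain ⟨hq, hsub⟩ := ih (hs.wf hp)
    exact ⟨hq, hsub.trans hs.prefixes_subset⟩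

theorem Purg.exists_isFinOver {S R : Proc A} (h : Purg S R) (hS : ReplOnly S) (hR : R.IsFin) :
    ∃ T : Proc A, T.IsFinOver S ∧ EqD R T := by
  obtain ⟨k, -, p, hsteps, hE⟩ := h
  obtain ⟨hp, hsub⟩ := hsteps.wf_and_prefixes_subset hS.wf
  refine ⟨p.finPart, ⟨hp.isFin_finPart, p.prefixes_finPart_subset.trans hsub⟩, .symm ?_⟩
  have hE' := hE.finPart
  rw [Proc.finPart, Proc.finPart_of_isFin hR] at hE'
  exact hE'.trans ((EqD.congPar hS.finPart_eqD_nil (.refl R)).trans (.nilPar R))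

end CCS

theorem cancel_R_R_general {A : Type} {S R₁ R₂ : CCS.Proc A} (hS : CCS.ReplOnly S)
    (hseed : CCS.IsSeed S) (h : CCS.Bisim (CCS.Proc.par S R₁) (CCS.Proc.par S R₂))
    (hR₁ : ∃ T : CCS.Proc A, T.IsFinOver S ∧ CCS.EqD R₁ T)
    (hR₂ : ∃ T : CCS.Proc A, T.IsFinOver S ∧ CCS.EqD R₂ T) : CCS.EqD R₁ R₂ := by
  obtain ⟨T₁, hT₁, hE₁⟩ := hR₁
  obtain ⟨T₂, hT₂, hE₂⟩ := hR₂
  have hcls : S.cls + T₁.cls = S.cls + T₂.cls := by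
    rw [← hE₁.cls_eq, ← hE₂.cls_eq]
    exact CCS.Proc.cls_eq_cls.2 h
  have hbisim : CCS.Bisim T₁ T₂ := hseed.bisim_of_add_eq_add hS hT₁ hT₂ hcls
  exact hE₁.trans ((hbisim.eqD_of_isFin hT₁.1 hT₂.1).trans hE₂.symm)

/-- If `S | R₁ ~ S | R₂` and `S ▷ Rᵢ` (`i = 1,2`), then `R₁ ≡D R₂`. -/
theorem cancel_R_R {A : Type} [Countable A]
    (S R₁ R₂ : CCS.Proc A) (hS : CCS.ReplOnly S) (hseed : CCS.IsSeed S)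
    (hR₁ : R₁.IsFin) (hR₂ : R₂.IsFin)
    (h : CCS.Bisim (CCS.Proc.par S R₁) (CCS.Proc.par S R₂))
    (hp₁ : CCS.Purg S R₁) (hp₂ : CCS.Purg S R₂) :
    CCS.EqD R₁ R₂ :=
  cancel_R_R_general hS hseed h (hp₁.exists_isFinOver hS hR₁) (hp₂.exists_isFinOver hS hR₂)
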